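/- Generalized Chebyshev's inequality for tensors: Let A be a deterministic positive definite d×d complex matrix, let X be a random Hermitian d×d matrix such that |X|^p has integrable entries, and let p ≥ 1. Then ℙ(X ⋠ A) ≤ Tr(𝔼[|X|^p]·A^{−p}). -/

import Mathlib

open MeasureTheory
open scoped ComplexOrder

noncomputable section

/-- `d × d` complex matrices: the model for square tensors
`ℂ^{I_1×⋯×I_N×I_1×⋯×I_N}` under the Einstein product, with `d = ∏ I_j`. -/
abbrev Mat (d : ℕ) := Matrix (Fin d) (Fin d) ℂ

/-- Continuous functional calculus: apply `f : ℝ → ℝ` to the eigenvalues of a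
(Hermitian) matrix. -/
noncomputable def mfun {d : ℕ} (f : ℝ → ℝ) (A : Mat d) : Mat d := cfc f A

/-- Real matrix power `A^r` via the continuous functional calculus. -/
noncomputable def mpow {d : ℕ} (A : Mat d) (r : ℝ) : Mat d :=
  cfc (fun x : ℝ => x ^ r) A

/-- The positive semidefinite absolute value `|A| = (A²)^{1/2}` of a Hermitian
matrix, obtained by applying `|·|` to the eigenvalues. -/
noncomputable def matAbs {d : ℕ} (A : Mat d) : Mat d := mfun (fun x => |x|) A

/-- Largest eigenvalue of a Hermitian matrix (junk value `0` otherwise). -/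
noncomputable def eigMax {d : ℕ} (A : Mat d) : ℝ :=
  if h : A.IsHermitian then ⨆ i, h.eigenvalues i else 0

/-- Smallest eigenvalue of a Hermitian matrix (junk value `0` otherwise). -/
noncomputable def eigMin {d : ℕ} (A : Mat d) : ℝ :=
  if h : A.IsHermitian then ⨅ i, h.eigenvalues i else 0

/-- The `i`-th largest eigenvalue (`0`-indexed, so `eigDesc A 0 = λ₁(A)` is the
largest) of a Hermitian matrix; junk value `0` otherwise. -/
noncomputable def eigDesc {d : ℕ} (A : Mat d) (i : ℕ) : ℝ :=
  if h : i < d ∧ A.IsHermitian then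
    (h.2.eigenvalues ∘ Tuple.sort h.2.eigenvalues) (Fin.rev ⟨i, h.1⟩) else 0

/-- Operator perspective `X #_f Y = X^{1/2} · f(X^{-1/2} Y X^{-1/2}) · X^{1/2}`. -/
noncomputable def persp {d : ℕ} (f : ℝ → ℝ) (X Y : Mat d) : Mat d :=
  mpow X (1/2) * mfun f (mpow X (-(1/2)) * Y * mpow X (-(1/2))) * mpow X (1/2)

/-- `TMI¹` : positive continuous functions on `(0,∞)` with `f 1 = 1` that are
tensor (matrix, in dimension `d`) monotone increasing. -/
def TMI1 (d : ℕ) (f : ℝ → ℝ) : Prop :=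
  ContinuousOn f (Set.Ioi 0) ∧ (∀ x > 0, 0 < f x) ∧ f 1 = 1 ∧
    ∀ A B : Mat d, A.PosDef → B.PosDef → (A - B).PosSemidef →
      (mfun f A - mfun f B).PosSemidef

/-- `TMD¹` : positive continuous functions on `(0,∞)` with `h 1 = 1` that are
tensor (matrix, in dimension `d`) monotone decreasing. -/
def TMD1 (d : ℕ) (h : ℝ → ℝ) : Prop :=
  ContinuousOn h (Set.Ioi 0) ∧ (∀ x > 0, 0 < h x) ∧ h 1 = 1 ∧
    ∀ A B : Mat d, A.PosDef → B.PosDef → (A - B).PosSemidef →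
      (mfun h B - mfun h A).PosSemidef

/-- `TC¹` : positive continuous functions on `(0,∞)` with `g 1 = 1` that are
tensor (matrix, in dimension `d`) convex. -/
def TC1 (d : ℕ) (g : ℝ → ℝ) : Prop :=
  ContinuousOn g (Set.Ioi 0) ∧ (∀ x > 0, 0 < g x) ∧ g 1 = 1 ∧
    ∀ A B : Mat d, A.PosDef → B.PosDef → ∀ t : ℝ, 0 ≤ t → t ≤ 1 →
      ((t • mfun g A + (1 - t) • mfun g B) - mfun g (t • A + (1 - t) • B)).PosSemidef

/-- `Z_j := X^{-2^{j-1}} · Y^{2^j} · X^{-2^{j-1}}` (so `Z_0 = X^{-1/2} Y X^{-1/2}`);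
this is `Z_{k-1}` of the paper for `k = j+1`. -/
noncomputable def Zmat {d : ℕ} (X Y : Mat d) (j : ℕ) : Mat d :=
  mpow X (-((2 : ℝ) ^ ((j : ℝ) - 1))) * mpow Y ((2 : ℝ) ^ (j : ℝ)) *
    mpow X (-((2 : ℝ) ^ ((j : ℝ) - 1)))

/-- `Ψ_lower(q,f,X,Y)` for `q = 2ⁿ·q₀`. -/
noncomputable def PsiLower {d : ℕ} (q0 : ℝ) (n : ℕ) (f : ℝ → ℝ) (X Y : Mat d) : ℝ :=
  eigMin (mpow (mfun f (Zmat X Y n)) (-q0) * mfun f (mpow (Zmat X Y n) q0)) *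
    ∏ k ∈ Finset.range n,
      eigMin (mpow (mfun f (Zmat X Y k)) (-2) * mfun f (mpow (Zmat X Y k) 2))

/-- `Ψ_upper(q,f,X,Y)` for `q = 2ⁿ·q₀`. -/
noncomputable def PsiUpper {d : ℕ} (q0 : ℝ) (n : ℕ) (f : ℝ → ℝ) (X Y : Mat d) : ℝ :=
  eigMax (mpow (mfun f (Zmat X Y n)) (-q0) * mfun f (mpow (Zmat X Y n) q0)) *
    ∏ k ∈ Finset.range n,
      eigMax (mpow (mfun f (Zmat X Y k)) (-2) * mfun f (mpow (Zmat X Y k) 2))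

/-- The Kantorovich constant `K(m, M, p)`. -/
noncomputable def Kconst (m M p : ℝ) : ℝ :=
  ((p - 1) * (M ^ p - m ^ p) / (p * (m * M ^ p - M * m ^ p))) ^ p *
    (m * M ^ p - M * m ^ p) / ((p - 1) * (M - m))

/-- The Kantorovich constant, interpreted as `1` when `p = 1` or `m = M`. -/
noncomputable def Kc (m M p : ℝ) : ℝ := if p = 1 ∨ m = M then 1 else Kconst m M p

/-- `ψ(q, f, Z) = max( f(λ_min(Z)^q)/f(λ_min(Z))^q , f(λ_max(Z)^q)/f(λ_max(Z))^q )`. -/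
noncomputable def psiRatio {d : ℕ} (q : ℝ) (f : ℝ → ℝ) (Z : Mat d) : ℝ :=
  max (f (eigMin Z ^ q) / f (eigMin Z) ^ q) (f (eigMax Z ^ q) / f (eigMax Z) ^ q)

/-- Entrywise expectation of a random matrix. -/
noncomputable def Emat {d : ℕ} {Ω : Type*} [MeasurableSpace Ω] (μ : Measure Ω)
    (X : Ω → Mat d) : Mat d := fun i j => ∫ ω, X ω i j ∂μ

/-!
The proof is a matrix Markov inequality followed by the Löwner–Heinz theorem. A positive
semidefinite matrix is bounded by its trace, so conjugating by `B ^ (1/2)` gives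
`P ≤ tr (P B⁻¹) • B`; hence `P ⋠ B` forces `1 < tr (P B⁻¹)`, and the scalar Markov inequality
applies. Take `P = |X| ^ p` and `B = A ^ p`: since `1 / p ≤ 1`, the root `t ↦ t ^ (1 / p)` is
operator monotone, so `|X| ^ p ≤ A ^ p` would imply `X ≤ |X| ≤ A`.
-/

section LownerOrder

open scoped MatrixOrder Ring

lemma le_of_rpow_le_rpow {𝔸 : Type*} [CStarAlgebra 𝔸] [PartialOrder 𝔸] [StarOrderedRing 𝔸]
    {a b : 𝔸} {p : ℝ} (hp : 1 ≤ p) (ha : 0 ≤ a) (hb : 0 ≤ b) (h : a ^ p ≤ b ^ p) : a ≤ b := by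
  have hp₀ : 0 < p := one_pos.trans_le hp
  have root_rpow {c : 𝔸} (hc : 0 ≤ c) : (c ^ p) ^ p⁻¹ = c := by
    rw [CFC.rpow_rpow_of_exponent_nonneg c p p⁻¹ hp₀.le (inv_nonneg.2 hp₀.le),
      mul_inv_cancel₀ hp₀.ne', CFC.rpow_one c]
  simpa only [root_rpow ha, root_rpow hb] using
    CFC.rpow_le_rpow ⟨inv_nonneg.2 hp₀.le, inv_le_one_of_one_le₀ hp⟩ h

variable {n 𝕜 : Type*} [Fintype n] [RCLike 𝕜] {A B : Matrix n n 𝕜}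

lemma trace_conjSqrt [DecidableEq n] (hB : 0 ≤ B) : (CFC.conjSqrt B A).trace = (A * B).trace := by
  rw [CFC.conjSqrt_apply, Matrix.trace_mul_cycle, CFC.sqrt_mul_sqrt_self B, Matrix.trace_mul_comm]

lemma conjSqrt_nonneg [DecidableEq n] (hA : 0 ≤ A) : 0 ≤ CFC.conjSqrt B A :=
  (map_zero (CFC.conjSqrt B)).symm.trans_le (CFC.conjSqrt_le_conjSqrt hA)

lemma trace_mul_nonneg (hA : 0 ≤ A) (hB : 0 ≤ B) : 0 ≤ (A * B).trace := by
  classical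
  rw [← trace_conjSqrt hB]
  exact (Matrix.nonneg_iff_posSemidef.1 (conjSqrt_nonneg hA)).trace_nonneg

variable [DecidableEq n]

lemma le_re_trace_smul_one (hA : 0 ≤ A) : A ≤ RCLike.re A.trace • (1 : Matrix n n 𝕜) := by
  have hA' := Matrix.nonneg_iff_posSemidef.1 hA
  have eigenvalue_le (i : n) : hA'.1.eigenvalues i ≤ RCLike.re A.trace := by
    rw [hA'.1.trace_eq_sum_eigenvalues, ← RCLike.ofReal_sum, RCLike.ofReal_re]
    exact Finset.single_le_sum (fun j _ => hA'.eigenvalues_nonneg j) (Finset.mem_univ i)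
  rw [← Algebra.algebraMap_eq_smul_one]
  refine le_algebraMap_of_spectrum_le (fun x hx => ?_) hA'.1
  rw [hA'.1.spectrum_real_eq_range_eigenvalues] at hx
  obtain ⟨i, rfl⟩ := hx
  exact eigenvalue_le i

lemma le_re_trace_mul_inv_smul (hA : 0 ≤ A) (hB : B.PosDef) :
    A ≤ RCLike.re (A * B⁻¹).trace • B := by
  have hB' : IsStrictlyPositive B := hB.isStrictlyPositive
  calc A = CFC.conjSqrt B (CFC.conjSqrt B⁻¹ʳ A) := (CFC.conjSqrt_conjSqrt_ringInverse B A).symm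
    _ ≤ CFC.conjSqrt B (RCLike.re (CFC.conjSqrt B⁻¹ʳ A).trace • 1) :=
      CFC.conjSqrt_le_conjSqrt (le_re_trace_smul_one (conjSqrt_nonneg hA))
    _ = RCLike.re (A * B⁻¹).trace • B := by
      rw [map_smul, CFC.conjSqrt_one B, trace_conjSqrt hB'.ringInverse.nonneg,
        Matrix.nonsing_inv_eq_ringInverse]

lemma le_of_re_trace_mul_inv_le_one (hA : 0 ≤ A) (hB : B.PosDef)
    (h : RCLike.re (A * B⁻¹).trace ≤ 1) : A ≤ B := by
  calc A ≤ RCLike.re (A * B⁻¹).trace • B := le_re_trace_mul_inv_smul hA hB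
    _ ≤ (1 : ℝ) • B := smul_le_smul_of_nonneg_right h hB.posSemidef.nonneg
    _ = B := one_smul ℝ B

end LownerOrder

section FunctionalCalculus

open scoped MatrixOrder

variable {d : ℕ} {A : Mat d}

lemma mpow_eq_rpow (hA : 0 ≤ A) (r : ℝ) : mpow A r = A ^ r :=
  (CFC.rpow_eq_cfc_real hA).symm

lemma mpow_nonneg (hA : 0 ≤ A) (r : ℝ) : 0 ≤ mpow A r := by
  rw [mpow_eq_rpow hA]
  exact CFC.rpow_nonneg

lemma matAbs_nonneg (A : Mat d) : 0 ≤ matAbs A :=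
  cfc_nonneg fun x _ => abs_nonneg x

lemma le_matAbs (hA : A.IsHermitian) : A ≤ matAbs A := by
  calc A = cfc id A := (cfc_id ℝ A hA).symm
    _ ≤ matAbs A := cfc_mono fun x _ => le_abs_self x

end FunctionalCalculus

section Expectation

open scoped MatrixOrder

variable {Ω : Type*} [MeasurableSpace Ω] {μ : Measure Ω}

lemma integrable_trace_mul {m n 𝕜 : Type*} [Fintype m] [Fintype n] [RCLike 𝕜]
    {X : Ω → Matrix m n 𝕜} (hX : ∀ i j, Integrable (fun ω => X ω i j) μ) (C : Matrix n m 𝕜) :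
    Integrable (fun ω => (X ω * C).trace) μ :=
  integrable_finsetSum _ fun i _ => integrable_finsetSum _ fun j _ => (hX i j).mul_const _

variable {d : ℕ} {X : Ω → Mat d}

lemma trace_Emat_mul (hX : ∀ i j, Integrable (fun ω => X ω i j) μ) (C : Mat d) :
    (Emat μ X * C).trace = ∫ ω, (X ω * C).trace ∂μ := by
  have entry_integrable (i j : Fin d) : Integrable (fun ω => X ω i j * C j i) μ :=
    (hX i j).mul_const _
  simp only [Matrix.trace, Matrix.diag, Matrix.mul_apply, Emat]
  rw [integral_finsetSum _ fun i _ => integrable_finsetSum _ fun j _ => entry_integrable i j]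
  refine Finset.sum_congr rfl fun i _ => ?_
  rw [integral_finsetSum _ fun j _ => entry_integrable i j]
  simp only [integral_mul_const]

lemma re_trace_Emat_mul (hX : ∀ i j, Integrable (fun ω => X ω i j) μ) (C : Mat d) :
    (Emat μ X * C).trace.re = ∫ ω, (X ω * C).trace.re ∂μ := by
  rw [trace_Emat_mul hX]
  exact (integral_re (integrable_trace_mul hX C)).symm

lemma re_trace_Emat_mul_nonneg (hX : ∀ i j, Integrable (fun ω => X ω i j) μ)
    (hX₀ : ∀ᵐ ω ∂μ, 0 ≤ X ω) {C : Mat d} (hC : 0 ≤ C) : 0 ≤ (Emat μ X * C).trace.re := by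
  rw [re_trace_Emat_mul hX]
  refine integral_nonneg_of_ae ?_
  filter_upwards [hX₀] with ω hω
  exact (Complex.nonneg_iff.1 (trace_mul_nonneg hω hC)).1

/-- The matrix Markov inequality of Ahlswede and Winter. -/
lemma measure_not_le_le_re_trace_Emat_mul_inv (hX : ∀ i j, Integrable (fun ω => X ω i j) μ)
    (hX₀ : ∀ᵐ ω ∂μ, 0 ≤ X ω) {B : Mat d} (hB : B.PosDef) :
    μ {ω | ¬ X ω ≤ B} ≤ ENNReal.ofReal (Emat μ X * B⁻¹).trace.re := by
  have trace_integrable : Integrable (fun ω => (X ω * B⁻¹).trace.re) μ :=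
    (integrable_trace_mul hX B⁻¹).re
  have trace_nonneg : ∀ᵐ ω ∂μ, 0 ≤ (X ω * B⁻¹).trace.re := by
    filter_upwards [hX₀] with ω hω
    exact (Complex.nonneg_iff.1 (trace_mul_nonneg hω hB.inv.posSemidef.nonneg)).1
  have one_le_trace : ∀ᵐ ω ∂μ, ¬ X ω ≤ B → 1 ≤ ENNReal.ofReal (X ω * B⁻¹).trace.re := by
    filter_upwards [hX₀] with ω hω hXB
    rw [ENNReal.one_le_ofReal]
    exact (not_le.1 (mt (le_of_re_trace_mul_inv_le_one hω hB) hXB)).le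
  calc μ {ω | ¬ X ω ≤ B}
      ≤ μ {ω | 1 ≤ ENNReal.ofReal (X ω * B⁻¹).trace.re} := measure_mono_ae one_le_trace
    _ ≤ ∫⁻ ω, ENNReal.ofReal (X ω * B⁻¹).trace.re ∂μ := by
      simpa only [one_mul] using
        mul_meas_ge_le_lintegral₀ trace_integrable.aemeasurable.ennreal_ofReal 1
    _ = ENNReal.ofReal (Emat μ X * B⁻¹).trace.re := by
      rw [re_trace_Emat_mul hX, ofReal_integral_eq_lintegral_ofReal trace_integrable trace_nonneg]

open scoped Matrix.Norms.L2Operator in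
lemma measure_not_le_le_re_trace_Emat_rpow_mul_rpow_neg {p : ℝ} (hp : 1 ≤ p)
    (hX : ∀ i j, Integrable (fun ω => (X ω ^ p) i j) μ) (hX₀ : ∀ᵐ ω ∂μ, 0 ≤ X ω)
    {A : Mat d} (hA : A.PosDef) :
    μ {ω | ¬ X ω ≤ A} ≤ ENNReal.ofReal (Emat μ (fun ω => X ω ^ p) * A ^ (-p)).trace.re := by
  have hA' : IsStrictlyPositive A := hA.isStrictlyPositive
  have not_rpow_le : ∀ᵐ ω ∂μ, ¬ X ω ≤ A → ¬ X ω ^ p ≤ A ^ p := by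
    filter_upwards [hX₀] with ω hω
    exact mt (le_of_rpow_le_rpow hp hω hA'.nonneg)
  rw [← CFC.inverse_rpow A p (by positivity), ← Matrix.nonsing_inv_eq_ringInverse]
  exact (measure_mono_ae not_rpow_le).trans <|
    measure_not_le_le_re_trace_Emat_mul_inv hX (ae_of_all _ fun _ => CFC.rpow_nonneg)
      (Matrix.isStrictlyPositive_iff_posDef.1 (hA'.rpow A p))

end Expectation

open scoped MatrixOrder in
theorem generalized_chebyshev_inequality_for_tensors_general {d : ℕ}
    {Ω : Type*} [MeasurableSpace Ω] (μ : Measure Ω)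
    (A : Mat d) (hA : A.PosDef) (X : Ω → Mat d)
    (p : ℝ) (hp : 1 ≤ p)
    (hherm : ∀ᵐ ω ∂μ, (X ω).IsHermitian)
    (hint : ∀ i j, Integrable (fun ω => mpow (matAbs (X ω)) p i j) μ) :
    μ {ω | ¬ (A - X ω).PosSemidef} ≤ ENNReal.ofReal
      (Matrix.trace (Emat μ (fun ω => mpow (matAbs (X ω)) p) * mpow A (-p))).re := by
  have not_matAbs_le : ∀ᵐ ω ∂μ, ¬ X ω ≤ A → ¬ matAbs (X ω) ≤ A := by
    filter_upwards [hherm] with ω hω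
    exact mt (le_matAbs hω).trans
  simp only [mpow_eq_rpow (matAbs_nonneg _), mpow_eq_rpow hA.posSemidef.nonneg] at hint ⊢
  exact (measure_mono_ae not_matAbs_le).trans <|
    measure_not_le_le_re_trace_Emat_rpow_mul_rpow_neg hp hint
      (ae_of_all _ fun ω => matAbs_nonneg (X ω)) hA

/-- **Generalized Chebyshev's inequality for tensors** (Theorem 3.5). For a
deterministic PD matrix `A`, a random Hermitian matrix `X` with `|X|^p` having
integrable entries, and `p ≥ 1`: `ℙ(X ⋠ A) ≤ Tr(𝔼[|X|^p]·A^{-p})`. -/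
theorem generalized_chebyshev_inequality_for_tensors {d : ℕ} (hd : 1 ≤ d)
    {Ω : Type*} [MeasurableSpace Ω] (μ : Measure Ω) [IsProbabilityMeasure μ]
    (A : Mat d) (hA : A.PosDef) (X : Ω → Mat d)
    (p : ℝ) (hp : 1 ≤ p)
    (hherm : ∀ᵐ ω ∂μ, (X ω).IsHermitian)
    (hint : ∀ i j, Integrable (fun ω => mpow (matAbs (X ω)) p i j) μ) :
    (μ {ω | ¬ (A - X ω).PosSemidef}).toReal ≤
      (Matrix.trace (Emat μ (fun ω => mpow (matAbs (X ω)) p) * mpow A (-p))).re :=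
  ENNReal.toReal_le_of_le_ofReal
    (re_trace_Emat_mul_nonneg hint (ae_of_all _ fun ω => mpow_nonneg (matAbs_nonneg (X ω)) p)
      (mpow_nonneg hA.posSemidef.nonneg (-p)))
    (generalized_chebyshev_inequality_for_tensors_general μ A hA X p hp hherm hint)
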